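/- arXiv:1607.01166 — 2 statements merged into one kernel-verified Lean document; each statement's English description precedes it below -/
import Mathlib

section
/- Let ν be the standard Gaussian measure on ℝ, let m ≥ 1, let t₀ < t₁ < … < t_m be pairwise distinct nonnegative reals, and let (b₀, …, b_m) be the unique tuple with Σ_{l=0}^m b_l e^{−k t_l} = 0 for k ∈ {0, …, m−1} and Σ_{l=0}^m b_l e^{−m t_l} = 1. Let ψ : ℝ → ℝ be bounded and measurable, and define Φ(x) = Σ_{l=0}^m b_l ∫_ℝ ψ( e^{−t_l} x + √(1 − e^{−2t_l}) y ) ν(dy). Then Φ is bounded with ‖Φ‖_∞ ≤ ‖ψ‖_∞ Σ_{l=0}^m |b_l|, and for every nonnegative integer k, ∫_ℝ Φ H_k dν = ( Σ_{l=0}^m b_l e^{−k t_l} ) ∫_ℝ ψ H_k dν. In particular ∫_ℝ Φ H_k dν = 0 for all k < m and ∫_ℝ Φ H_m dν = ∫_ℝ ψ H_m dν; hence, if ∫_ℝ ψ H_m dν ≠ 0, then Φ has Hermite rank m. -/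
open MeasureTheory ProbabilityTheory Filter Set
open scoped Topology

noncomputable section

/-- The `n`-th probabilists' Hermite polynomial, as a function `ℝ → ℝ`. -/
def hermiteR (n : ℕ) (x : ℝ) : ℝ := Polynomial.aeval x (Polynomial.hermite n)

/-- The standard Gaussian measure on `ℝ`. -/
def stdGaussian : Measure ℝ := gaussianReal 0 1

open Polynomial in
lemma poly_integrable (p : ℝ[X]) : Integrable (fun x => p.eval x) (gaussianReal 0 1) := by
  induction p using Polynomial.induction_on' with
  | add p q hp hq => simp only [eval_add]; exact hp.add hq
  | monomial n a =>
    simp only [eval_monomial]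
    refine Integrable.const_mul ?_ a
    have h := (memLp_id_gaussianReal (μ := 0) (v := 1) (n : NNReal)).integrable_norm_pow'
    refine Integrable.mono' h (by fun_prop) (ae_of_all _ fun x => ?_)
    simp

open Polynomial in
lemma poly_stein (p : ℝ[X]) : ∫ x, x * p.eval x ∂(gaussianReal 0 1) =
    ∫ x, (derivative p).eval x ∂(gaussianReal 0 1) := by
  have key : ∀ q : ℝ[X], Integrable (fun x => gaussianPDFReal 0 1 x * q.eval x) := by
    intro q
    have h := poly_integrable q
    rw [gaussianReal_of_var_ne_zero _ one_ne_zero, integrable_withDensity_iff_integrable_smul'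
      (measurable_gaussianPDF _ _) (ae_of_all _ fun _ ↦ gaussianPDF_lt_top)] at h
    simpa [toReal_gaussianPDF] using h
  have hd : ∀ x, HasDerivAt (fun x => gaussianPDFReal 0 1 x * p.eval x)
      (gaussianPDFReal 0 1 x * (derivative p - X * p).eval x) x := by
    intro x
    have h1 : HasDerivAt (fun x => gaussianPDFReal 0 1 x) (gaussianPDFReal 0 1 x * (-x)) x := by
      unfold gaussianPDFReal
      have : HasDerivAt (fun x : ℝ => -(x - 0) ^ 2 / (2 * ((1 : NNReal) : ℝ))) (-x) x := by
        have := ((((hasDerivAt_id x).sub_const 0).pow 2).neg).div_const (2 * ((1 : NNReal) : ℝ))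
        refine this.congr_deriv ?_
        simp
        ring
      refine ((this.exp).const_mul _).congr_deriv ?_
      ring
    refine (h1.mul (p.hasDerivAt x)).congr_deriv ?_
    simp
    ring
  have h0 := integral_eq_zero_of_hasDerivAt_of_integrable hd (key _) (key _)
  have h2 : ∫ x, (derivative p - X * p).eval x ∂(gaussianReal 0 1) = 0 := by
    rw [integral_gaussianReal_eq_integral_smul one_ne_zero]
    simpa using h0
  have h3 := poly_integrable (derivative p)
  have h4 := poly_integrable (X * p)
  simp only [eval_sub] at h2
  rw [integral_sub h3 h4] at h2
  simp only [eval_mul, eval_X] at h2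
  linarith

open Polynomial in
lemma derivative_hermite_succ (n : ℕ) :
    derivative (hermite (n + 1)) = ((n + 1 : ℕ) : ℤ[X]) * hermite n := by
  induction n with
  | zero => simp
  | succ n ih =>
    rw [hermite_succ (n + 1), derivative_sub, derivative_mul, ih, derivative_mul, derivative_X,
      derivative_natCast, hermite_succ n]
    push_cast
    ring

open Polynomial in
lemma hermiteR_succ_succ (n : ℕ) (x : ℝ) :
    hermiteR (n + 2) x = x * hermiteR (n + 1) x - (n + 1) * hermiteR n x := by
  unfold hermiteR
  rw [hermite_succ (n + 1), derivative_hermite_succ]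
  simp

open Polynomial in
lemma hermiteR_eq_eval (n : ℕ) (x : ℝ) :
    hermiteR n x = ((hermite n).map (Int.castRingHom ℝ)).eval x := by
  unfold hermiteR
  simp [aeval_def, eval₂_eq_eval_map]

open Polynomial in
lemma hermiteR_comp_eq_eval (n : ℕ) (c s x : ℝ) :
    hermiteR n (c + s * x) =
      (((hermite n).map (Int.castRingHom ℝ)).comp (C c + C s * X)).eval x := by
  rw [hermiteR_eq_eval]
  simp

lemma hermiteR_integrable (n : ℕ) (c s : ℝ) :
    Integrable (fun x => hermiteR n (c + s * x)) (gaussianReal 0 1) := by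
  simp only [hermiteR_comp_eq_eval]
  exact poly_integrable _

open Polynomial in
lemma hermiteR_stein (n : ℕ) (c s : ℝ) :
    Integrable (fun x => x * hermiteR (n + 1) (c + s * x)) (gaussianReal 0 1) ∧
    ∫ x, x * hermiteR (n + 1) (c + s * x) ∂(gaussianReal 0 1) =
      s * (n + 1) * ∫ x, hermiteR n (c + s * x) ∂(gaussianReal 0 1) := by
  constructor
  · have := poly_integrable (X * ((hermite (n + 1)).map (Int.castRingHom ℝ)).comp (C c + C s * X))
    simpa [hermiteR_eq_eval] using this
  · simp only [hermiteR_comp_eq_eval]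
    rw [poly_stein, ← integral_const_mul]
    congr 1 with x
    rw [derivative_comp, derivative_map, derivative_hermite_succ]
    simp
    ring

lemma ou_hermite (a s : ℝ) (h : a ^ 2 + s ^ 2 = 1) (n : ℕ) (u : ℝ) :
    ∫ v, hermiteR n (a * u + s * v) ∂(gaussianReal 0 1) = a ^ n * hermiteR n u := by
  induction n using Nat.strong_induction_on with
  | _ n ih =>
    match n with
    | 0 => simp [hermiteR]
    | 1 =>
      have h1 : Integrable (fun x : ℝ => x) (gaussianReal 0 1) := by
        simpa using poly_integrable Polynomial.X
      simp only [hermiteR, Polynomial.hermite_one, Polynomial.aeval_X]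
      rw [integral_add (by fun_prop) (h1.const_mul s), integral_const_mul s, integral_id_gaussianReal]
      simp
    | n + 2 =>
      obtain ⟨i1, e1⟩ := hermiteR_stein n (a * u) s
      have i2 := hermiteR_integrable (n + 1) (a * u) s
      have i3 := hermiteR_integrable n (a * u) s
      have : ∀ v, hermiteR (n + 2) (a * u + s * v) =
          (a * u) * hermiteR (n + 1) (a * u + s * v) + s * (v * hermiteR (n + 1) (a * u + s * v))
          - (n + 1) * hermiteR n (a * u + s * v) := by
        intro v
        rw [hermiteR_succ_succ]; ring
      simp only [this]
      rw [integral_sub (by exact (i2.const_mul _).add (i1.const_mul _)) (i3.const_mul _),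
        integral_add (i2.const_mul _) (i1.const_mul _), integral_const_mul, integral_const_mul,
        integral_const_mul, e1, ih n (by omega), ih (n + 1) (by omega), hermiteR_succ_succ]
      have hs : s ^ 2 = 1 - a ^ 2 := by linarith
      linear_combination (n + 1) * a ^ n * hermiteR n u * hs

lemma hermiteR_measurable (n : ℕ) : Measurable (hermiteR n) := by
  have : hermiteR n = fun x => ((Polynomial.hermite n).map (Int.castRingHom ℝ)).eval x :=
    funext fun x => hermiteR_eq_eval n x
  rw [this]
  fun_prop

lemma ou_main (θ : ℝ) (ψ : ℝ → ℝ) (hψ : Measurable ψ) (K : ℝ) (hK : ∀ x, |ψ x| ≤ K) (n : ℕ) :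
    Integrable (fun x => (∫ y, ψ (Real.cos θ * x + Real.sin θ * y) ∂(gaussianReal 0 1))
      * hermiteR n x) (gaussianReal 0 1) ∧
    ∫ x, (∫ y, ψ (Real.cos θ * x + Real.sin θ * y) ∂(gaussianReal 0 1)) * hermiteR n x
      ∂(gaussianReal 0 1) =
    Real.cos θ ^ n * ∫ x, ψ x * hermiteR n x ∂(gaussianReal 0 1) := by
  set ν := gaussianReal 0 1 with hν
  have hm := hermiteR_measurable n
  have hrot : (ν.prod ν).map (ContinuousLinearMap.rotation θ) = ν.prod ν :=
    IsGaussian.map_rotation_eq_self_of_forall_strongDual_eq_zero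
      (fun L => by simp [hν, integral_continuousLinearMap_gaussianReal]) θ
  let F : ℝ × ℝ → ℝ := fun p => ψ (Real.cos θ * p.1 + Real.sin θ * p.2) * hermiteR n p.1
  let G : ℝ × ℝ → ℝ := fun p => ψ p.1 * hermiteR n (Real.cos θ * p.1 + (-Real.sin θ) * p.2)
  have hFG : F = G ∘ (ContinuousLinearMap.rotation θ) := by
    funext p
    simp only [F, G, Function.comp, ContinuousLinearMap.rotation_apply, smul_eq_mul]
    congr 2
    linear_combination (-p.1) * (Real.cos_sq_add_sin_sq θ)
  have hGm : Measurable G := by fun_prop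
  have hFm : Measurable F := by fun_prop
  have hH : Integrable (hermiteR n) ν := by
    simpa using hermiteR_integrable n 0 1
  have hFi : Integrable F (ν.prod ν) := by
    have h1 : Integrable (fun p : ℝ × ℝ => hermiteR n p.1) (ν.prod ν) := hH.comp_fst ν
    exact h1.bdd_mul (c := K) (Measurable.aestronglyMeasurable (by fun_prop)) (ae_of_all _ fun p => hK _)
  have hGi : Integrable G (ν.prod ν) := by
    rw [← hrot, integrable_map_measure hGm.aestronglyMeasurable (by fun_prop), ← hFG]
    exact hFi
  have hint : ∫ p, F p ∂(ν.prod ν) = ∫ p, G p ∂(ν.prod ν) := by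
    conv_rhs => rw [← hrot]
    rw [integral_map (by fun_prop) hGm.aestronglyMeasurable, hFG]
    rfl
  constructor
  · have := hFi.integral_prod_left
    simpa only [F, integral_mul_const] using this
  · rw [integral_prod _ hFi, integral_prod _ hGi] at hint
    simp only [F, G, integral_mul_const, integral_const_mul] at hint
    rw [hint, ← integral_const_mul]
    congr 1 with u
    rw [ou_hermite _ _ (by simp) n u]
    ring

lemma ou_term (t : ℝ) (ht : 0 ≤ t) (ψ : ℝ → ℝ) (hψ : Measurable ψ) (K : ℝ)
    (hK : ∀ x, |ψ x| ≤ K) (n : ℕ) :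
    Integrable (fun x => (∫ y, ψ (Real.exp (-t) * x + Real.sqrt (1 - Real.exp (-(2 * t))) * y)
      ∂(gaussianReal 0 1)) * hermiteR n x) (gaussianReal 0 1) ∧
    ∫ x, (∫ y, ψ (Real.exp (-t) * x + Real.sqrt (1 - Real.exp (-(2 * t))) * y)
      ∂(gaussianReal 0 1)) * hermiteR n x ∂(gaussianReal 0 1) =
    Real.exp (-(n : ℝ) * t) * ∫ x, ψ x * hermiteR n x ∂(gaussianReal 0 1) := by
  have h := ou_main (Real.arccos (Real.exp (-t))) ψ hψ K hK n
  have h1 : Real.exp (-t) ≤ 1 := Real.exp_le_one_iff.2 (by linarith)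
  have h2 : Real.exp (-t) ^ 2 = Real.exp (-(2 * t)) := by
    rw [← Real.exp_nat_mul]; congr 1; push_cast; ring
  have h3 : Real.exp (-t) ^ n = Real.exp (-(n : ℝ) * t) := by
    rw [← Real.exp_nat_mul]; congr 1; ring
  rw [Real.cos_arccos (by linarith [Real.exp_pos (-t)]) h1, Real.sin_arccos, h2, h3] at h
  exact h

/-- Construction of a bounded function of Hermite rank `m` via the Ornstein–Uhlenbeck
semigroup: with `Φ = Σ_l b_l P_{t_l} ψ`, one has `‖Φ‖_∞ ≤ ‖ψ‖_∞ Σ_l |b_l|`,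
`∫ Φ H_k dν = (Σ_l b_l e^{-k t_l}) ∫ ψ H_k dν` for every `k`; in particular
`∫ Φ H_k dν = 0` for `k < m`, `∫ Φ H_m dν = ∫ ψ H_m dν`, and if `∫ ψ H_m dν ≠ 0`
then `Φ` has Hermite rank `m`. -/
theorem ou_combination_hermite_rank
    (m : ℕ) (hm : 1 ≤ m) (t : Fin (m + 1) → ℝ) (ht0 : ∀ l, 0 ≤ t l) (htmono : StrictMono t)
    (b : Fin (m + 1) → ℝ)
    (hb0 : ∀ k : ℕ, k < m → ∑ l, b l * Real.exp (-(k : ℝ) * t l) = 0)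
    (hb1 : ∑ l, b l * Real.exp (-(m : ℝ) * t l) = 1)
    (ψ : ℝ → ℝ) (hψmeas : Measurable ψ) (Kψ : ℝ) (hψbdd : ∀ x, |ψ x| ≤ Kψ)
    (Φ : ℝ → ℝ)
    (hΦ : ∀ x, Φ x = ∑ l, b l *
      ∫ y, ψ (Real.exp (-t l) * x + Real.sqrt (1 - Real.exp (-(2 * t l))) * y) ∂stdGaussian) :
    (∀ x, |Φ x| ≤ Kψ * ∑ l, |b l|) ∧
    (∀ k : ℕ, ∫ x, Φ x * hermiteR k x ∂stdGaussian =
        (∑ l, b l * Real.exp (-(k : ℝ) * t l)) * ∫ x, ψ x * hermiteR k x ∂stdGaussian) ∧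
    (∀ k : ℕ, k < m → ∫ x, Φ x * hermiteR k x ∂stdGaussian = 0) ∧
    (∫ x, Φ x * hermiteR m x ∂stdGaussian = ∫ x, ψ x * hermiteR m x ∂stdGaussian) ∧
    ((∫ x, ψ x * hermiteR m x ∂stdGaussian) ≠ 0 →
      (∀ k : ℕ, k < m → ∫ x, Φ x * hermiteR k x ∂stdGaussian = 0) ∧
        (∫ x, Φ x * hermiteR m x ∂stdGaussian) ≠ 0) := by
  unfold _root_.stdGaussian at *
  have hmain : ∀ k : ℕ, ∫ x, Φ x * hermiteR k x ∂(gaussianReal 0 1) =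
      (∑ l, b l * Real.exp (-(k : ℝ) * t l)) * ∫ x, ψ x * hermiteR k x ∂(gaussianReal 0 1) := by
    intro k
    simp only [hΦ, Finset.sum_mul, mul_assoc]
    rw [integral_finsetSum _ fun l _ =>
      ((ou_term (t l) (ht0 l) ψ hψmeas Kψ hψbdd k).1).const_mul (b l)]
    refine Finset.sum_congr rfl fun l _ => ?_
    rw [integral_const_mul, (ou_term (t l) (ht0 l) ψ hψmeas Kψ hψbdd k).2]
  have hz : ∀ k : ℕ, k < m → ∫ x, Φ x * hermiteR k x ∂(gaussianReal 0 1) = 0 := by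
    intro k hk
    rw [hmain, hb0 k hk, zero_mul]
  have h1 : ∫ x, Φ x * hermiteR m x ∂(gaussianReal 0 1) =
      ∫ x, ψ x * hermiteR m x ∂(gaussianReal 0 1) := by
    rw [hmain, hb1, one_mul]
  refine ⟨fun x => ?_, hmain, hz, h1, fun h => ⟨hz, by rwa [h1]⟩⟩
  rw [hΦ, Finset.mul_sum]
  refine (Finset.abs_sum_le_sum_abs _ _).trans (Finset.sum_le_sum fun l _ => ?_)
  rw [abs_mul, mul_comm]
  refine mul_le_mul_of_nonneg_right ?_ (abs_nonneg _)
  have := norm_integral_le_of_norm_le_const (μ := gaussianReal 0 1) (C := Kψ)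
    (f := fun y => ψ (Real.exp (-t l) * x + Real.sqrt (1 - Real.exp (-(2 * t l))) * y))
    (ae_of_all _ fun y => hψbdd _)
  simpa using this

end
end

section
/- Let (Ω, 𝓕, P) be a probability space, m ≥ 1 an integer, H ∈ (1/2, 1), and let L : (0,∞) → (0,∞) be slowly varying at +∞ and bounded away from 0 and +∞ on every compact subset of (0,∞). Let q : ℝ × Ω → ℝ be jointly measurable and uniformly bounded with |E[ q(s, ·) q(t, ·) ]| ≤ C₁ L(|t − s|)^{2m} |t − s|^{−2(1 − H)} for all s ≠ t and some constant C₁. Let F₁, F₂ : [0,1] → ℝ be bounded measurable, set 𝔛(ε) = ε^{1 − H} L(1/ε)^m, and define for x ∈ [0,1] the random variable 𝓤^ε(x) = (1/𝔛(ε)) ∫_0^1 [ F₁(y) 1_{[0,x]}(y) + x F₂(y) ] q(y/ε, ·) dy. Then for every ζ ∈ (0,1) and every β > 0 with 2mβ + 2(1 − H) < 1 there exists a constant C such that for all 0 ≤ u < v ≤ 1 and all ε ∈ (0, ζ), E[ |𝓤^ε(u) − 𝓤^ε(v)|² ] ≤ C ( (v − u)^{2 − 2mβ − 2(1 − H)}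 + (v − u)² ). In particular, since 2 − 2mβ − 2(1 − H) > 1, the family (𝓤^ε)_{ε ∈ (0, ζ)} satisfies Kolmogorov's tightness criterion on C([0,1]). -/
open MeasureTheory Filter Set
open scoped Topology

noncomputable section

/-- `L : (0,∞) → (0,∞)` is slowly varying at `+∞`. -/
def SlowlyVaryingAtTop (L : ℝ → ℝ) : Prop :=
  ∀ lam : ℝ, 0 < lam → Tendsto (fun x => L (lam * x) / L x) atTop (𝓝 1)

/-- `L` is bounded away from `0` and `+∞` on every compact subset of `(0,∞)`. -/
def BddAwayOnCompacts (L : ℝ → ℝ) : Prop :=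
  ∀ K : Set ℝ, K ⊆ Set.Ioi 0 → IsCompact K →
    ∃ c C : ℝ, 0 < c ∧ ∀ x ∈ K, c ≤ L x ∧ L x ≤ C


lemma aux_unif (h : ℝ → ℝ) (hm : Measurable h)
    (hs : ∀ t : ℝ, Tendsto (fun x => h (x + t) - h x) atTop (𝓝 0)) (β : ℝ) (hβ : 0 < β) :
    ∃ x0 : ℝ, 0 ≤ x0 ∧ ∀ x, x0 ≤ x → ∀ u, 0 ≤ u → u ≤ 1 → |h (x + u) - h x| ≤ β := by
  set g : ℝ → ℝ → ℝ := fun x t => min 1 |h (x + t) - h x| with hg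
  have hg0 : ∀ x t, 0 ≤ g x t := fun x t => le_min zero_le_one (abs_nonneg _)
  have hg1 : ∀ x t, g x t ≤ 1 := fun x t => min_le_left _ _
  have hgm : ∀ x, Measurable (g x) := fun x => by
    simp only [hg]; fun_prop
  have hgi : ∀ x a b, IntervalIntegrable (g x) volume a b := fun x a b => by
    apply IntervalIntegrable.mono_fun (g := g x) (f := fun _ => (1:ℝ)) (by simp)
      (hgm x).aestronglyMeasurable
    refine Eventually.of_forall fun t => ?_
    simp only [Real.norm_eq_abs, abs_of_nonneg (hg0 x t), abs_one]
    exact hg1 x t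
  have hG : Tendsto (fun x => ∫ t in (0:ℝ)..2, g x t) atTop (𝓝 0) := by
    have := intervalIntegral.tendsto_integral_filter_of_dominated_convergence (μ := volume)
      (a := 0) (b := 2) (l := (atTop : Filter ℝ)) (F := g) (f := fun _ => (0:ℝ)) (fun _ => (1:ℝ))
      (Eventually.of_forall fun x => (hgm x).aestronglyMeasurable)
      (Eventually.of_forall fun x => Eventually.of_forall fun t _ => by
        rw [Real.norm_eq_abs, abs_of_nonneg (hg0 x t)]; exact hg1 x t)
      (by simp)
      (Eventually.of_forall fun t _ => by
        have h1 := (hs t).abs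
        have h2 := (tendsto_const_nhds (x := (1:ℝ))).min h1
        simpa [hg] using h2)
    simpa using this
  have hpos : 0 < min 1 β / 2 := by positivity
  obtain ⟨x0, hx0⟩ := eventually_atTop.1 (hG.eventually (gt_mem_nhds hpos))
  refine ⟨max x0 0, le_max_right _ _, fun x hx u hu0 hu1 => ?_⟩
  have hxx : x0 ≤ x := (le_max_left _ _).trans hx
  have e1 := hx0 x hxx
  have e2 := hx0 (x + u) (by linarith)
  have key : min 1 |h (x + u) - h x| < min 1 β := by
    have s1 : ∫ t in (1:ℝ)..2, g x t ≤ ∫ t in (0:ℝ)..2, g x t := by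
      apply intervalIntegral.integral_mono_interval (by norm_num) (by norm_num) le_rfl
        (Eventually.of_forall fun t => hg0 x t) (hgi _ _ _)
    have s2 : ∫ t in (1:ℝ)..2, g (x+u) (t - u) ≤ ∫ t in (0:ℝ)..2, g (x+u) t := by
      rw [intervalIntegral.integral_comp_sub_right]
      apply intervalIntegral.integral_mono_interval (by linarith) (by linarith) (by linarith)
        (Eventually.of_forall fun t => hg0 _ t) (hgi _ _ _)
    have i2 : IntervalIntegrable (fun t => g (x+u) (t-u)) volume 1 2 := by
      simpa using (hgi (x+u) (1-u) (2-u)).comp_sub_right u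
    have s3 : ∫ t in (1:ℝ)..2, min 1 |h (x + u) - h x| ≤
        ∫ t in (1:ℝ)..2, (g x t + g (x+u) (t - u)) := by
      apply intervalIntegral.integral_mono_on (by norm_num) (by simp) ((hgi _ _ _).add i2)
      intro t _
      simp only [hg]
      have ha : x + u + (t - u) = x + t := by ring
      rw [ha]
      have tri : |h (x+u) - h x| ≤ |h (x+t) - h x| + |h (x+t) - h (x+u)| := by
        have := abs_sub_le (h (x+u)) (h (x+t)) (h x)
        rw [abs_sub_comm (h (x+u)) (h (x+t))] at this
        linarith
      have := abs_nonneg (h (x+t) - h x)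
      have := abs_nonneg (h (x+t) - h (x+u))
      rcases min_cases 1 |h (x+t) - h x| with hh | hh <;>
      rcases min_cases 1 |h (x+t) - h (x+u)| with hh' | hh' <;>
      rcases min_cases 1 |h (x+u) - h x| with hh'' | hh'' <;> linarith
    rw [intervalIntegral.integral_add (hgi _ _ _) i2, intervalIntegral.integral_const] at s3
    rw [show (2:ℝ) - 1 = 1 by norm_num, one_smul] at s3
    linarith
  rcases lt_min_iff.1 key with ⟨k1, k2⟩
  rcases min_lt_iff.1 k1 with k | k
  · exact absurd k (lt_irrefl _)
  · rw [min_eq_right k.le] at k2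
    exact k2.le

lemma aux_growth (h : ℝ → ℝ) (β x0 : ℝ) (hβ : 0 < β)
    (hu : ∀ x, x0 ≤ x → ∀ u, 0 ≤ u → u ≤ 1 → |h (x + u) - h x| ≤ β) (x y : ℝ) (hx : x0 ≤ x)
    (hxy : x ≤ y) : h x - h y ≤ β * (y - x) + β := by
  have step : ∀ n : ℕ, ∀ x, x0 ≤ x → h x - h (x + n) ≤ β * n := by
    intro n
    induction n with
    | zero => intro x _; simp
    | succ k ih =>
      intro x hx
      have a := ih x hx
      have b := hu (x + k) (by have : (0:ℝ) ≤ k := by positivity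
                               linarith) 1 zero_le_one le_rfl
      have c := (abs_le.1 b).1
      push_cast
      rw [← add_assoc]
      linarith
  have hn := Nat.floor_le (sub_nonneg.2 hxy)
  have hn' := Nat.lt_floor_add_one (y - x)
  set n := ⌊y - x⌋₊
  have a := step n x hx
  have b := hu (x + n) (by have : (0:ℝ) ≤ n := by positivity
                           linarith) (y - x - n) (by linarith) (by linarith)
  have c := (abs_le.1 b).1
  rw [show x + n + (y - x - n) = y by ring] at c
  nlinarith

lemma aux_potter (L : ℝ → ℝ) (hLpos : ∀ x > 0, 0 < L x) (hLmeas : Measurable L)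
    (hLslow : SlowlyVaryingAtTop L) (hLbdd : BddAwayOnCompacts L) (β : ℝ) (hβ : 0 < β) :
    ∃ A : ℝ, 0 < A ∧ ∀ x y, 1 ≤ x → x ≤ y → L x ≤ A * (y / x) ^ β * L y := by
  set h : ℝ → ℝ := fun x => Real.log (L (Real.exp x)) with hh
  have hm : Measurable h := by simp only [hh]; fun_prop
  have hp : ∀ x, 0 < L (Real.exp x) := fun x => hLpos _ (Real.exp_pos x)
  have hs : ∀ t : ℝ, Tendsto (fun x => h (x + t) - h x) atTop (𝓝 0) := by
    intro t
    have h1 := (hLslow (Real.exp t) (Real.exp_pos t)).comp Real.tendsto_exp_atTop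
    have h2 := h1.log one_ne_zero
    rw [Real.log_one] at h2
    refine h2.congr fun x => ?_
    simp only [Function.comp, hh]
    rw [← Real.exp_add, Real.log_div (hp _).ne' (hp _).ne', add_comm]
  obtain ⟨x0, hx0, hu⟩ := aux_unif h hm hs β hβ
  have gr := aux_growth h β x0 hβ hu
  obtain ⟨c, C, hc, hcC⟩ := hLbdd (Set.Icc 1 (Real.exp x0))
    (fun x hx => lt_of_lt_of_le one_pos hx.1) isCompact_Icc
  have bd : ∀ x, 0 ≤ x → x ≤ x0 → Real.log c ≤ h x ∧ h x ≤ Real.log C := by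
    intro x h0 h1
    have := hcC (Real.exp x) ⟨by simpa using h0, by simpa using h1⟩
    exact ⟨Real.log_le_log hc this.1, Real.log_le_log (hp x) this.2⟩
  have bx := bd x0 hx0 le_rfl
  refine ⟨Real.exp (β + (Real.log C - Real.log c)), Real.exp_pos _, fun x y hx hxy => ?_⟩
  have hx' : 0 < x := by linarith
  have hy' : 0 < y := by linarith
  have l1 : 0 ≤ Real.log x := Real.log_nonneg hx
  have l2 : Real.log x ≤ Real.log y := Real.log_le_log hx' hxy
  have main : h (Real.log x) - h (Real.log y) ≤
      β * (Real.log y - Real.log x) + (β + (Real.log C - Real.log c)) := by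
    have nn : 0 ≤ β * (Real.log y - Real.log x) := mul_nonneg hβ.le (by linarith)
    rcases le_total x0 (Real.log x) with a | a
    · have := gr _ _ a l2
      linarith
    · have b1 := bd _ l1 a
      rcases le_total x0 (Real.log y) with b | b
      · have b2 := gr _ _ le_rfl b
        nlinarith
      · have b2 := bd _ (l1.trans l2) b
        linarith
  simp only [hh, Real.exp_log hx', Real.exp_log hy'] at main
  have px := hLpos x hx'
  have py := hLpos y hy'
  rw [← Real.log_le_log_iff px (by positivity), Real.log_mul (by positivity) py.ne',
    Real.log_mul (by positivity) (by positivity), Real.log_exp, Real.log_rpow (by positivity),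
    Real.log_div hy'.ne' hx'.ne']
  linarith

lemma aux_kernel (α : ℝ) (hα : α < 1) (a b y : ℝ) (hy : y ∈ Set.Icc a b) (h0 : 0 ≤ α) :
    IntervalIntegrable (fun z => |y - z| ^ (-α)) volume a b ∧
    ∫ z in a..b, |y - z| ^ (-α) ≤ 2 / (1 - α) * (b - a) ^ (1 - α) := by
  have hlt : -1 < -α := by linarith
  have i0 : ∀ c d : ℝ, IntervalIntegrable (fun z : ℝ => z ^ (-α)) volume c d := fun c d =>
    intervalIntegral.intervalIntegrable_rpow' hlt
  have i1 : IntervalIntegrable (fun z => (y - z) ^ (-α)) volume a y := by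
    simpa using (i0 (y - a) 0).comp_sub_left y
  have i2 : IntervalIntegrable (fun z => (z - y) ^ (-α)) volume y b := by
    simpa using (i0 0 (b - y)).comp_sub_right y
  have e1 : Set.EqOn (fun z => (y - z) ^ (-α)) (fun z => |y - z| ^ (-α)) (Set.uIcc a y) := by
    intro z hz
    rw [Set.uIcc_of_le hy.1] at hz
    simp only
    rw [abs_of_nonneg (by linarith [hz.2])]
  have e2 : Set.EqOn (fun z => (z - y) ^ (-α)) (fun z => |y - z| ^ (-α)) (Set.uIcc y b) := by
    intro z hz
    rw [Set.uIcc_of_le hy.2] at hz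
    simp only
    rw [abs_sub_comm, abs_of_nonneg (by linarith [hz.1])]
  have j1 : IntervalIntegrable (fun z => |y - z| ^ (-α)) volume a y :=
    i1.congr (e1.mono Set.uIoc_subset_uIcc)
  have j2 : IntervalIntegrable (fun z => |y - z| ^ (-α)) volume y b :=
    i2.congr (e2.mono Set.uIoc_subset_uIcc)
  refine ⟨j1.trans j2, ?_⟩
  rw [← intervalIntegral.integral_add_adjacent_intervals j1 j2,
    ← intervalIntegral.integral_congr e1, ← intervalIntegral.integral_congr e2,
    intervalIntegral.integral_comp_sub_left (fun z => z ^ (-α)),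
    intervalIntegral.integral_comp_sub_right (fun z => z ^ (-α)),
    sub_self, integral_rpow (Or.inl hlt), integral_rpow (Or.inl hlt),
    show -α + 1 = 1 - α by ring, Real.zero_rpow (by linarith)]
  have p : 0 < 1 - α := by linarith
  have q1 : (y - a) ^ (1 - α) ≤ (b - a) ^ (1 - α) :=
    Real.rpow_le_rpow (by linarith [hy.1]) (by linarith [hy.2]) p.le
  have q2 : (b - y) ^ (1 - α) ≤ (b - a) ^ (1 - α) :=
    Real.rpow_le_rpow (by linarith [hy.2]) (by linarith [hy.1]) p.le
  rw [← add_div, div_mul_eq_mul_div]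
  gcongr
  linarith

lemma aux_moment {Ω : Type*} [MeasurableSpace Ω] (P : Measure Ω) [IsProbabilityMeasure P]
    (p : ℝ × Ω → ℝ) (hp : Measurable p) (K : ℝ) (hK : ∀ x, |p x| ≤ K)
    (α D : ℝ) (hα : α < 1) (h0 : 0 ≤ α) (hD : 0 ≤ D) (a b : ℝ) (hab : a < b)
    (hcov : ∀ y ∈ Set.Icc a b, ∀ z ∈ Set.Icc a b, y ≠ z →
      |∫ ω, p (y, ω) * p (z, ω) ∂P| ≤ D * |y - z| ^ (-α))
    (f : ℝ → ℝ) (hf : Measurable f) (M : ℝ) (hM : 0 ≤ M) (hfM : ∀ y ∈ Set.Icc a b, |f y| ≤ M) :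
    Integrable (fun ω => (∫ y in a..b, f y * p (y, ω)) ^ 2) P ∧
    ∫ ω, (∫ y in a..b, f y * p (y, ω)) ^ 2 ∂P ≤
      D * M ^ 2 * (2 / (1 - α)) * (b - a) ^ (2 - α) := by
  set μ : Measure ℝ := volume.restrict (Set.Ioc a b) with hμ
  set φ : ℝ → ℝ := Set.indicator (Set.Icc a b) f with hφ
  have hφm : Measurable φ := hf.indicator measurableSet_Icc
  have hφM : ∀ y, |φ y| ≤ M := by
    intro y
    by_cases hy : y ∈ Set.Icc a b
    · simpa [hφ, hy] using hfM y hy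
    · simp [hφ, hy, hM]
  have hne : Nonempty Ω := nonempty_of_isProbabilityMeasure P
  have hK0 : 0 ≤ K := (abs_nonneg _).trans (hK (0, Classical.arbitrary Ω))
  set G : ℝ → Ω → ℝ := fun y ω => φ y * p (y, ω) with hG
  have hGm : Measurable (Function.uncurry G) := by
    have : Function.uncurry G = fun x => φ x.1 * p x := by ext ⟨y, ω⟩; rfl
    rw [this]; fun_prop
  have hGb : ∀ y ω, |G y ω| ≤ M * K := fun y ω => by
    simp only [hG, abs_mul]
    exact mul_le_mul (hφM y) (hK _) (abs_nonneg _) hM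
  set S : Ω → ℝ := fun ω => ∫ y, G y ω ∂μ with hS
  have hSe : ∀ ω, ∫ y in a..b, f y * p (y, ω) = S ω := by
    intro ω
    rw [intervalIntegral.integral_of_le hab.le]
    simp only [hS, hμ]
    apply setIntegral_congr_fun measurableSet_Ioc
    intro y hy
    simp [hG, hφ, Set.Ioc_subset_Icc_self hy]
  have hGs : StronglyMeasurable (Function.uncurry G) := hGm.stronglyMeasurable
  have hSm : StronglyMeasurable S := by
    have : StronglyMeasurable (fun x : Ω × ℝ => G x.2 x.1) :=
      (hGm.comp measurable_swap).stronglyMeasurable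
    exact this.integral_prod_right
  have hSb : ∀ ω, |S ω| ≤ M * K * μ.real Set.univ := by
    intro ω
    have := norm_integral_le_of_norm_le_const (μ := μ) (f := fun y => G y ω) (C := M * K)
      (Eventually.of_forall fun y => by simpa using hGb y ω)
    simpa using this
  have hint : Integrable (fun ω => S ω ^ 2) P := by
    refine Integrable.of_bound (hSm.pow 2).aestronglyMeasurable ((M * K * μ.real Set.univ) ^ 2)
      (Eventually.of_forall fun ω => ?_)
    rw [norm_pow]
    exact pow_le_pow_left₀ (norm_nonneg _) (hSb ω) 2
  simp only [hSe]
  refine ⟨hint, ?_⟩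
  have eq1 : ∫ ω, S ω ^ 2 ∂P = ∫ y, (∫ ω, G y ω * S ω ∂P) ∂μ := by
    have : ∀ ω, S ω ^ 2 = ∫ y, G y ω * S ω ∂μ := fun ω => by
      rw [integral_mul_const, sq]
    simp only [this]
    refine integral_integral_swap (f := fun ω y => G y ω * S ω) ?_
    refine Integrable.of_bound (C := M * K * (M * K * μ.real Set.univ)) ?_
      (Eventually.of_forall fun x => ?_)
    · refine StronglyMeasurable.aestronglyMeasurable (Measurable.stronglyMeasurable ?_)
      exact (hGm.comp measurable_swap).mul (hSm.measurable.comp measurable_fst)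
    · simp only [Function.uncurry, norm_mul]
      exact mul_le_mul (hGb _ _) (hSb _) (norm_nonneg _) (by positivity)
  have eq2 : ∀ y, ∫ ω, G y ω * S ω ∂P = ∫ z, (φ y * φ z * ∫ ω, p (y, ω) * p (z, ω) ∂P) ∂μ := by
    intro y
    have : ∀ ω, G y ω * S ω = ∫ z, G y ω * G z ω ∂μ := fun ω => by
      rw [integral_const_mul]
    simp only [this]
    rw [integral_integral_swap (f := fun ω z => G y ω * G z ω)]
    · congr 1; ext z
      rw [← integral_const_mul]
      congr 1; ext ω
      simp only [hG]; ring
    refine Integrable.of_bound (C := M * K * (M * K)) ?_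
      (Eventually.of_forall fun x => ?_)
    · refine StronglyMeasurable.aestronglyMeasurable (Measurable.stronglyMeasurable ?_)
      refine Measurable.mul ?_ (hGm.comp measurable_swap)
      exact hGm.comp (measurable_const.prodMk measurable_fst)
    · simp only [Function.uncurry, norm_mul]
      exact mul_le_mul (hGb _ _) (hGb _ _) (norm_nonneg _) (by positivity)
  have bd : ∀ y ∈ Set.Ioc a b, ‖∫ ω, G y ω * S ω ∂P‖ ≤
      M ^ 2 * D * (2 / (1 - α) * (b - a) ^ (1 - α)) := by
    intro y hy
    have hy' := Set.Ioc_subset_Icc_self hy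
    obtain ⟨k1, k2⟩ := aux_kernel α hα a b y hy' h0
    rw [intervalIntegrable_iff_integrableOn_Ioc_of_le hab.le] at k1
    rw [intervalIntegral.integral_of_le hab.le] at k2
    rw [eq2 y]
    calc _ ≤ ∫ z, M ^ 2 * D * |y - z| ^ (-α) ∂μ := by
          refine norm_integral_le_of_norm_le (k1.const_mul (M ^ 2 * D)) ?_
          have hne : ∀ᵐ z ∂μ, z ≠ y := ae_restrict_of_ae (Measure.ae_ne volume y)
          filter_upwards [hne, ae_restrict_mem measurableSet_Ioc] with z hz hz'
          rw [norm_mul, norm_mul, sq]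
          have := hcov y hy' z (Set.Ioc_subset_Icc_self hz') hz.symm
          rw [mul_assoc (M * M)]
          exact mul_le_mul (mul_le_mul (hφM y) (hφM z) (norm_nonneg _) hM) this
            (norm_nonneg _) (by positivity)
      _ ≤ _ := by
          rw [integral_const_mul]
          exact mul_le_mul_of_nonneg_left k2 (by positivity)
  rw [eq1]
  have fin := norm_setIntegral_le_of_norm_le_const (μ := volume) (s := Set.Ioc a b)
    (by simp) bd
  rw [Real.volume_real_Ioc_of_le hab.le] at fin
  refine (Real.le_norm_self _).trans (fin.trans (le_of_eq ?_))
  rw [show 2 - α = (1 - α) + 1 by ring, Real.rpow_add_one (by linarith)]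
  ring

lemma aux_cov {Ω : Type*} [MeasurableSpace Ω] (P : Measure Ω) [IsProbabilityMeasure P]
    (m : ℕ) (H : ℝ) (hH : H ∈ Set.Ioo (1 / 2 : ℝ) 1)
    (L : ℝ → ℝ) (hLpos : ∀ x > 0, 0 < L x) (hLmeas : Measurable L)
    (hLslow : SlowlyVaryingAtTop L) (hLbdd : BddAwayOnCompacts L)
    (q : ℝ × Ω → ℝ) (K : ℝ) (hqbdd : ∀ p, |q p| ≤ K)
    (C₁ : ℝ)
    (hcov : ∀ s t : ℝ, s ≠ t →
      |∫ ω, q (s, ω) * q (t, ω) ∂P| ≤ C₁ * L |t - s| ^ (2 * m) * |t - s| ^ (-(2 * (1 - H))))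
    (β : ℝ) (hβ : 0 < β) :
    ∃ B : ℝ, 0 ≤ B ∧ ∀ ε ∈ Set.Ioo (0 : ℝ) 1, ∀ y ∈ Set.Icc (0 : ℝ) 1, ∀ z ∈ Set.Icc (0 : ℝ) 1,
      y ≠ z → |∫ ω, q (y / ε, ω) * q (z / ε, ω) ∂P| ≤
        B * (ε ^ (1 - H) * L (1 / ε) ^ m) ^ 2 * |y - z| ^ (-(2 * m * β + 2 * (1 - H))) := by
  obtain ⟨A, hA, hpot⟩ := aux_potter L hLpos hLmeas hLslow hLbdd β hβ
  have hL1 := hLpos 1 one_pos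
  have hne : Nonempty Ω := nonempty_of_isProbabilityMeasure P
  have hK0 : 0 ≤ K := (abs_nonneg _).trans (hqbdd (0, Classical.arbitrary Ω))
  have hpow : ∀ x y, 1 ≤ x → x ≤ y →
      L x ^ (2 * m) ≤ A ^ (2 * m) * (y / x) ^ (2 * m * β) * L y ^ (2 * m) := by
    intro x y hx hxy
    have h1 := pow_le_pow_left₀ (hLpos x (by linarith)).le (hpot x y hx hxy) (2 * m)
    rw [mul_pow, mul_pow, ← Real.rpow_mul_natCast (div_nonneg (by linarith) (by linarith)),
      show β * ((2 * m : ℕ) : ℝ) = 2 * m * β by push_cast; ring] at h1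
    exact h1
  refine ⟨|C₁| * A ^ (2 * m) + K * K * A ^ (2 * m) / L 1 ^ (2 * m), by positivity, ?_⟩
  intro ε hε y hy z hz hyz
  obtain ⟨hε0, hε1⟩ := hε
  set γ := 2 * (1 - H) with hγ
  have hγ0 : 0 < γ := by have := hH.2; simp only [hγ]; linarith
  have hX1 : 1 ≤ 1 / ε := by rw [le_div_iff₀ hε0]; linarith
  have hXL := hLpos (1 / ε) (by positivity)
  have hsq : (ε ^ (1 - H) * L (1 / ε) ^ m) ^ 2 = (1 / ε) ^ (-γ) * L (1 / ε) ^ (2 * m) := by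
    rw [mul_pow, ← pow_mul, mul_comm m 2, ← Real.rpow_mul_natCast hε0.le, one_div,
      Real.inv_rpow hε0.le, Real.rpow_neg hε0.le, inv_inv]
    congr 2
    simp only [hγ]; push_cast; ring
  rw [hsq]
  have hr : 0 < |y - z| := abs_pos.2 (sub_ne_zero.2 hyz)
  have hr1 : |y - z| ≤ 1 := by
    rw [abs_le]; constructor <;> linarith [hy.1, hy.2, hz.1, hz.2]
  have hdist : |z / ε - y / ε| = |y - z| * (1 / ε) := by
    rw [← sub_div, abs_div, abs_of_pos hε0, abs_sub_comm, mul_one_div]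
  have hsplit : |y - z| ^ (-(2 * m * β + γ)) = |y - z| ^ (-(2 * m * β)) * |y - z| ^ (-γ) := by
    rw [← Real.rpow_add hr]; congr 1; ring
  set X := 1 / ε with hX
  set r := |y - z| with hrdef
  have hX0 : 0 < X := by linarith
  rcases le_or_gt 1 (r * X) with hc | hc
  · have h1 := hcov (y / ε) (z / ε) (fun h => hyz (by field_simp at h; exact h))
    rw [hdist] at h1
    have h2 := hpow (r * X) X hc (by nlinarith)
    have h3 : X / (r * X) = r⁻¹ := by field_simp
    rw [h3, Real.inv_rpow hr.le, ← Real.rpow_neg hr.le] at h2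
    have hp := hLpos (r * X) (by linarith)
    calc _ ≤ C₁ * L (r * X) ^ (2 * m) * (r * X) ^ (-γ) := h1
      _ ≤ |C₁| * L (r * X) ^ (2 * m) * (r * X) ^ (-γ) := by
          gcongr; exact le_abs_self _
      _ ≤ |C₁| * (A ^ (2 * m) * r ^ (-(2 * m * β)) * L X ^ (2 * m)) * (r * X) ^ (-γ) := by
          gcongr
      _ = (|C₁| * A ^ (2 * m)) * (X ^ (-γ) * L X ^ (2 * m)) * r ^ (-(2 * m * β + γ)) := by
          rw [Real.mul_rpow hr.le hX0.le, hsplit]; ring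
      _ ≤ _ := by
          gcongr
          have : 0 ≤ K * K * A ^ (2 * m) / L 1 ^ (2 * m) := by positivity
          linarith
  · have h1 : |∫ ω, q (y / ε, ω) * q (z / ε, ω) ∂P| ≤ K * K := by
      have := norm_integral_le_of_norm_le_const (μ := P)
        (f := fun ω => q (y / ε, ω) * q (z / ε, ω)) (C := K * K)
        (Eventually.of_forall fun ω => by
          rw [norm_mul]
          exact mul_le_mul (hqbdd _) (hqbdd _) (norm_nonneg _) hK0)
      simpa using this
    have h2 := hpow 1 X le_rfl hX1
    rw [div_one] at h2
    have h3 : X ^ (2 * m * β + γ) ≤ r ^ (-(2 * m * β + γ)) := by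
      rw [Real.rpow_neg hr.le, ← Real.inv_rpow hr.le]
      refine Real.rpow_le_rpow hX0.le ?_ (by positivity)
      rw [le_inv_comm₀ hX0 hr, ← one_div, le_div_iff₀ hX0]
      exact hc.le
    calc _ ≤ K * K := h1
      _ = K * K / L 1 ^ (2 * m) * L 1 ^ (2 * m) := by field_simp
      _ ≤ K * K / L 1 ^ (2 * m) * (A ^ (2 * m) * X ^ (2 * m * β) * L X ^ (2 * m)) := by gcongr
      _ = (K * K * A ^ (2 * m) / L 1 ^ (2 * m)) * (X ^ (-γ) * L X ^ (2 * m)) *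
            X ^ (2 * m * β + γ) := by
          have : X ^ (2 * m * β) = X ^ (-γ) * X ^ (2 * m * β + γ) := by
            rw [← Real.rpow_add hX0]; congr 1; ring
          rw [this]; ring
      _ ≤ (K * K * A ^ (2 * m) / L 1 ^ (2 * m)) * (X ^ (-γ) * L X ^ (2 * m)) *
            r ^ (-(2 * m * β + γ)) := by gcongr
      _ ≤ _ := by
          gcongr
          have : 0 ≤ |C₁| * A ^ (2 * m) := by positivity
          linarith

/-- Kolmogorov-type moment bound for the rescaled corrector process
`𝒰ᵉ(x) = (1/𝔛(ε)) ∫_0^1 (F₁(y) 1_{[0,x]}(y) + x F₂(y)) q(y/ε) dy`, `𝔛(ε) = ε^{1-H} L(1/ε)^m`: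
`E[|𝒰ᵉ(u) - 𝒰ᵉ(v)|²] ≤ C ((v-u)^{2-2mβ-2(1-H)} + (v-u)²)`, uniformly in `ε ∈ (0,ζ)`; since the
exponent `2 - 2mβ - 2(1-H)` exceeds `1`, this yields Kolmogorov's tightness criterion. -/
theorem corrector_increment_second_moment_bound
    {Ω : Type*} [MeasurableSpace Ω] (P : Measure Ω) [IsProbabilityMeasure P]
    (m : ℕ) (hm : 1 ≤ m) (H : ℝ) (hH : H ∈ Set.Ioo (1 / 2 : ℝ) 1)
    (L : ℝ → ℝ) (hLpos : ∀ x > 0, 0 < L x) (hLmeas : Measurable L)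
    (hLslow : SlowlyVaryingAtTop L) (hLbdd : BddAwayOnCompacts L)
    (q : ℝ × Ω → ℝ) (hqmeas : Measurable q) (K : ℝ) (hqbdd : ∀ p, |q p| ≤ K)
    (C₁ : ℝ)
    (hcov : ∀ s t : ℝ, s ≠ t →
      |∫ ω, q (s, ω) * q (t, ω) ∂P| ≤ C₁ * L |t - s| ^ (2 * m) * |t - s| ^ (-(2 * (1 - H))))
    (F₁ F₂ : ℝ → ℝ) (hF₁meas : Measurable F₁) (hF₂meas : Measurable F₂)
    (K₁ K₂ : ℝ) (hF₁bdd : ∀ y ∈ Set.Icc (0 : ℝ) 1, |F₁ y| ≤ K₁)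
    (hF₂bdd : ∀ y ∈ Set.Icc (0 : ℝ) 1, |F₂ y| ≤ K₂)
    (ζ β : ℝ) (hζ : ζ ∈ Set.Ioo (0 : ℝ) 1) (hβ : 0 < β)
    (hβ' : 2 * m * β + 2 * (1 - H) < 1)
    (U : ℝ → ℝ → Ω → ℝ)
    (hU : ∀ ε x ω, U ε x ω = (1 / (ε ^ (1 - H) * L (1 / ε) ^ m)) *
      ∫ y in (0 : ℝ)..1,
        (F₁ y * Set.indicator (Set.Icc 0 x) (fun _ => (1 : ℝ)) y + x * F₂ y) * q (y / ε, ω)) :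
    (1 < 2 - 2 * m * β - 2 * (1 - H)) ∧
    ∃ C : ℝ, ∀ u v : ℝ, 0 ≤ u → u < v → v ≤ 1 → ∀ ε ∈ Set.Ioo (0 : ℝ) ζ,
      (∫ ω, |U ε u ω - U ε v ω| ^ 2 ∂P) ≤
        C * ((v - u) ^ (2 - 2 * m * β - 2 * (1 - H)) + (v - u) ^ 2) := by
  have hα : 2 * m * β + 2 * (1 - H) < 1 := hβ'
  have hα0 : 0 ≤ 2 * m * β + 2 * (1 - H) := by
    have := hH.2
    have h2 : 0 ≤ 2 * (m : ℝ) * β := by positivity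
    linarith
  refine ⟨by linarith, ?_⟩
  obtain ⟨B, hB, hcovB⟩ := aux_cov P m H hH L hLpos hLmeas hLslow hLbdd q K hqbdd C₁ hcov β hβ
  set α := 2 * m * β + 2 * (1 - H) with hαdef
  have hexp : 2 - 2 * m * β - 2 * (1 - H) = 2 - α := by simp only [hαdef]; ring
  rw [hexp]
  have hp1 : 0 < 1 - α := by linarith
  have hK₁ : 0 ≤ K₁ := (abs_nonneg _).trans (hF₁bdd 0 (by simp))
  have hK₂ : 0 ≤ K₂ := (abs_nonneg _).trans (hF₂bdd 0 (by simp))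
  refine ⟨2 * (B * (2 / (1 - α)) * K₁ ^ 2) + 2 * (B * (2 / (1 - α)) * K₂ ^ 2), ?_⟩
  intro u v hu huv hv ε hε
  have hε0 := hε.1
  have hε1 : ε < 1 := hε.2.trans hζ.2
  set χ := ε ^ (1 - H) * L (1 / ε) ^ m with hχ
  have hχ0 : 0 < χ := by
    have := hLpos (1 / ε) (by positivity)
    positivity
  set p : ℝ × Ω → ℝ := fun x => q (x.1 / ε, x.2) with hp
  have hpm : Measurable p := by
    simp only [hp]; fun_prop
  have hpK : ∀ x, |p x| ≤ K := fun x => hqbdd _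
  have hpc := hcovB ε ⟨hε0, hε1⟩
  obtain ⟨iA, bA⟩ := aux_moment P p hpm K hpK α (B * χ ^ 2) hα hα0 (by positivity) u v huv
    (fun y hy z hz => hpc y ⟨hu.trans hy.1, hy.2.trans hv⟩ z ⟨hu.trans hz.1, hz.2.trans hv⟩)
    F₁ hF₁meas K₁ hK₁ (fun y hy => hF₁bdd y ⟨hu.trans hy.1, hy.2.trans hv⟩)
  obtain ⟨iB, bB⟩ := aux_moment P p hpm K hpK α (B * χ ^ 2) hα hα0 (by positivity) 0 1 one_pos
    hpc F₂ hF₂meas K₂ hK₂ hF₂bdd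
  rw [sub_zero, Real.one_rpow, mul_one] at bB
  have hii : ∀ (g : ℝ → ℝ) (M : ℝ), Measurable g → (∀ y ∈ Set.Icc (0:ℝ) 1, |g y| ≤ M) → ∀ ω,
      ∀ c ∈ Set.Icc (0:ℝ) 1, ∀ d ∈ Set.Icc (0:ℝ) 1,
      IntervalIntegrable (fun y => g y * p (y, ω)) volume c d := by
    intro g M hg hgM ω c hc d hd
    rw [intervalIntegrable_iff]
    refine Measure.integrableOn_of_bounded (M := M * K) (by simp) ?_ ?_
    · exact (hg.mul (hpm.comp (measurable_id.prodMk measurable_const))).aestronglyMeasurable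
    · filter_upwards [ae_restrict_mem measurableSet_uIoc] with y hy
      have hy' : y ∈ Set.Icc (0:ℝ) 1 := Set.uIcc_subset_Icc hc hd (Set.uIoc_subset_uIcc hy)
      rw [norm_mul]
      exact mul_le_mul (hgM y hy') (hpK _) (norm_nonneg _) ((abs_nonneg _).trans (hgM y hy'))
  have hUe : ∀ x ∈ Set.Icc (0:ℝ) 1, ∀ ω, U ε x ω = (1 / χ) *
      ((∫ y in (0:ℝ)..x, F₁ y * p (y, ω)) + x * ∫ y in (0:ℝ)..1, F₂ y * p (y, ω)) := by
    intro x hx ω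
    rw [hU]
    congr 1
    have e : ∀ y, (F₁ y * Set.indicator (Set.Icc 0 x) (fun _ => (1 : ℝ)) y + x * F₂ y) *
        q (y / ε, ω) = Set.indicator (Set.Icc 0 x) (fun y => F₁ y * p (y, ω)) y +
          x * (F₂ y * p (y, ω)) := by
      intro y
      by_cases hy : y ∈ Set.Icc 0 x
      · simp only [Set.indicator_of_mem hy, hp]; ring
      · simp only [Set.indicator_of_notMem hy, hp]; ring
    simp only [e]
    have h01 : (0:ℝ) ∈ Set.Icc (0:ℝ) 1 := by simp
    have h11 : (1:ℝ) ∈ Set.Icc (0:ℝ) 1 := by simp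
    have i1 := hii F₁ K₁ hF₁meas hF₁bdd ω 0 h01 1 h11
    have i2 := hii F₂ K₂ hF₂meas hF₂bdd ω 0 h01 1 h11
    rw [intervalIntegral.integral_add _ (i2.const_mul x), intervalIntegral.integral_const_mul]
    · congr 1
      rw [intervalIntegral.integral_of_le zero_le_one, intervalIntegral.integral_of_le hx.1,
        ← integral_Icc_eq_integral_Ioc, ← integral_Icc_eq_integral_Ioc,
        setIntegral_indicator measurableSet_Icc]
      congr 2
      exact Set.inter_eq_right.2 (Set.Icc_subset_Icc le_rfl hx.2)
    · rw [intervalIntegrable_iff] at i1 ⊢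
      exact i1.indicator measurableSet_Icc
  have hdiff : ∀ ω, |U ε u ω - U ε v ω| ^ 2 ≤ 2 / χ ^ 2 * (∫ y in u..v, F₁ y * p (y, ω)) ^ 2 +
      2 / χ ^ 2 * (v - u) ^ 2 * (∫ y in (0:ℝ)..1, F₂ y * p (y, ω)) ^ 2 := by
    intro ω
    have hu' : u ∈ Set.Icc (0:ℝ) 1 := ⟨hu, huv.le.trans hv⟩
    have hv' : v ∈ Set.Icc (0:ℝ) 1 := ⟨hu.trans huv.le, hv⟩
    have h01 : (0:ℝ) ∈ Set.Icc (0:ℝ) 1 := by simp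
    have hadd := intervalIntegral.integral_add_adjacent_intervals
      (hii F₁ K₁ hF₁meas hF₁bdd ω 0 h01 u hu') (hii F₁ K₁ hF₁meas hF₁bdd ω u hu' v hv')
    rw [hUe u hu' ω, hUe v hv' ω, ← hadd, sq_abs]
    generalize (∫ y in (0:ℝ)..u, F₁ y * p (y, ω)) = a
    generalize (∫ y in u..v, F₁ y * p (y, ω)) = b
    generalize (∫ y in (0:ℝ)..1, F₂ y * p (y, ω)) = c
    have e1 : (1 / χ * (a + u * c) - 1 / χ * (a + b + v * c)) ^ 2
        = 1 / χ ^ 2 * (b + (v - u) * c) ^ 2 := by ring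
    have e2 : 2 / χ ^ 2 * b ^ 2 + 2 / χ ^ 2 * (v - u) ^ 2 * c ^ 2 =
        1 / χ ^ 2 * (2 * b ^ 2 + 2 * ((v - u) * c) ^ 2) := by ring
    rw [e1, e2]
    gcongr
    nlinarith [sq_nonneg (b - (v - u) * c)]
  have hstep : ∫ ω, |U ε u ω - U ε v ω| ^ 2 ∂P ≤
      2 / χ ^ 2 * (∫ ω, (∫ y in u..v, F₁ y * p (y, ω)) ^ 2 ∂P) +
      2 / χ ^ 2 * (v - u) ^ 2 * (∫ ω, (∫ y in (0:ℝ)..1, F₂ y * p (y, ω)) ^ 2 ∂P) := by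
    rw [← integral_const_mul, ← integral_const_mul,
      ← integral_add (iA.const_mul _) (iB.const_mul _)]
    exact integral_mono_of_nonneg (Eventually.of_forall fun ω => by positivity)
      ((iA.const_mul _).add (iB.const_mul _)) (Eventually.of_forall hdiff)
  have hvu : 0 < v - u := by linarith
  have hw : 0 ≤ (v - u) ^ (2 - α) := by positivity
  calc _ ≤ _ := hstep
    _ ≤ 2 / χ ^ 2 * (B * χ ^ 2 * K₁ ^ 2 * (2 / (1 - α)) * (v - u) ^ (2 - α)) +
        2 / χ ^ 2 * (v - u) ^ 2 * (B * χ ^ 2 * K₂ ^ 2 * (2 / (1 - α))) := by gcongr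
    _ = 2 * (B * (2 / (1 - α)) * K₁ ^ 2) * (v - u) ^ (2 - α) +
        2 * (B * (2 / (1 - α)) * K₂ ^ 2) * (v - u) ^ 2 := by
        field_simp
    _ ≤ _ := by
        have t1 : 0 ≤ 2 * (B * (2 / (1 - α)) * K₁ ^ 2) * (v - u) ^ 2 := by positivity
        have t2 : 0 ≤ 2 * (B * (2 / (1 - α)) * K₂ ^ 2) * (v - u) ^ (2 - α) := by positivity
        linarith

end
end
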